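/- arXiv:q-alg/9507029 — 2 statements merged into one kernel-verified Lean document; each statement's English description precedes it below -/
import Mathlib

section
/- Comultiplication: Write t^a_b[0] := (−1)^{[b]} δ^a_b · 1 ∈ Y(gl(M|N)). Let Y ⊗̂ Y denote the ℤ₂-graded (super) tensor product algebra of Y(gl(M|N)) with itself, with multiplication (x ⊗ y)(x' ⊗ y') = (−1)^{|y||x'|} x x' ⊗ y y' for homogeneous elements. Then the assignment Δ(t^a_b[n]) = Σ_{c=1}^{M+N} Σ_{r=0}^{n} (−1)^{[c] + ([b]+[c])([c]+[a])} t^c_b[r] ⊗ t^a_c[n−r] extends to a unital ℂ-algebra homomorphism Δ: Y(gl(M|N)) → Y ⊗̂ Y. -/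
/-!
The defining relations say that the generating series `t^a_b(u) = ∑ t^a_b[n] u^{-n}` satisfy the
RTT relation. With `x = u⁻¹`, `y = v⁻¹` it reads
`(y - x) [t₁(x), t₂(y)} = ± x y (t(x) t(y) - t(y) t(x))` with suitable indices, and it can be
rearranged so that only the upper indices are exchanged on one side and only the lower ones on
the other (`RTT`). In this form the relation is visibly stable under the matrix product
`∑_c ± L^c_b R^a_c` of two mutually supercommuting solutions `L` and `R`: apply the relation of `R`,
swap the two summation indices in one term, and apply the relation of `L` (`RTT.comul`).

The series live in `A⟦x⟧⟦y⟧`, where `x` and `y` are central. The lemma `rtt_iff` translates between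
`RTT` for series and the closed commutator formula for the coefficients; the two non-sum terms of
the defining relations are the `r = 0` summand of that formula (`closed_iff`), because of the
convention `t^a_b[0] = (-1)^{[b]} δ^a_b`.
-/

open scoped BigOperators TensorProduct

namespace SY

/-- The parity `[a]` of an index: `0` if `a ≤ M` (1-based), `1` otherwise.  Indices are 0-based
`Fin (M+N)`, so `[a] = 0` iff `a < M`. -/
def pa (M : ℕ) {k : ℕ} (a : Fin k) : ℕ := if (a : ℕ) < M then 0 else 1

/-- Index type for the generators of the super Yangian: `(a, b, k)` encodes `t^a_b[k+1]`. -/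
abbrev Gen (M N : ℕ) := Fin (M + N) × Fin (M + N) × ℕ

/-- The free algebra on the generators. -/
abbrev F (M N : ℕ) := FreeAlgebra ℂ (Gen M N)

/-- `T M N a b n` is the free-algebra element corresponding to `t^a_b[n]` (`n ≥ 1`). -/
noncomputable def T (M N : ℕ) (a b : Fin (M + N)) (n : ℕ) : F M N :=
  FreeAlgebra.ι ℂ ((a, b, n - 1) : Gen M N)

noncomputable def sgn1 (M : ℕ) {k : ℕ} (a1 b1 a2 b2 : Fin k) : ℂ :=
  (-1 : ℂ) ^ ((pa M a1 + pa M b1) * (pa M a2 + pa M b2))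

noncomputable def sgn2 (M : ℕ) {k : ℕ} (a1 b1 a2 : Fin k) : ℂ :=
  (-1 : ℂ) ^ (pa M a1 * pa M a2 + pa M b1 * (pa M a1 + pa M a2))

/-- The defining relations of the super Yangian `Y(gl(M|N))`. -/
inductive Rel (M N : ℕ) : F M N → F M N → Prop
  | defining (a1 b1 a2 b2 : Fin (M + N)) (m n : ℕ) (hm : 1 ≤ m) (hn : 1 ≤ n) :
      Rel M N
        (T M N a1 b1 m * T M N a2 b2 n - sgn1 M a1 b1 a2 b2 • (T M N a2 b2 n * T M N a1 b1 m))
        ((if b1 = a2 then T M N a1 b2 (m + n - 1) else 0)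
          - sgn1 M a1 b1 a2 b2 • (if b2 = a1 then T M N a2 b1 (m + n - 1) else 0)
          + sgn2 M a1 b1 a2 •
              ∑ r ∈ Finset.Ico 1 (min m n),
                (T M N a2 b1 r * T M N a1 b2 (m + n - 1 - r)
                  - T M N a2 b1 (m + n - 1 - r) * T M N a1 b2 r))

/-- The super Yangian `Y(gl(M|N))` as the quotient of the free algebra by the defining
relations. -/
abbrev Y (M N : ℕ) := RingQuot (Rel M N)

/-- The generator `t^a_b[n]` of `Y(gl(M|N))` (for `n ≥ 1`). -/
noncomputable def t (M N : ℕ) (a b : Fin (M + N)) (n : ℕ) : Y M N :=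
  RingQuot.mkAlgHom ℂ (Rel M N) (T M N a b n)

/-- The generator of `Y(gl(M|N))` indexed by `g : Gen M N`, i.e. `t^a_b[k+1]` for
`g = (a,b,k)`. -/
noncomputable def tg (M N : ℕ) (g : Gen M N) : Y M N :=
  RingQuot.mkAlgHom ℂ (Rel M N) (FreeAlgebra.ι ℂ g)

/-- `g` indexes an odd generator iff `[a]+[b]` is odd. -/
abbrev oddG (M N : ℕ) (g : Gen M N) : Prop := (pa M g.1 + pa M g.2.1) % 2 = 1

/-- A representation of `Y(gl(M|N))` is irreducible if the space is nonzero and the only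
invariant subspaces are `⊥` and `⊤`. -/
def IsIrreducibleRep (M N : ℕ) {V : Type*} [AddCommGroup V] [Module ℂ V]
    (ρ : Y M N →ₐ[ℂ] Module.End ℂ V) : Prop :=
  (∃ v : V, v ≠ 0) ∧
    ∀ W : Submodule ℂ V, (∀ y : Y M N, ∀ w ∈ W, ρ y w ∈ W) → W = ⊥ ∨ W = ⊤

/-- `v` is a maximal vector of weight `Λ = (λ_a[n])`. -/
def IsMaximalVec (M N : ℕ) {V : Type*} [AddCommGroup V] [Module ℂ V]
    (ρ : Y M N →ₐ[ℂ] Module.End ℂ V) (v : V) (Λ : Fin (M + N) → ℕ → ℂ) : Prop :=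
  v ≠ 0 ∧
    (∀ a b : Fin (M + N), a < b → ∀ n : ℕ, 1 ≤ n → ρ (t M N a b n) v = 0) ∧
    (∀ (a : Fin (M + N)) (n : ℕ), 1 ≤ n → ρ (t M N a a n) v = Λ a n • v)


/-- The parity `|t^a_b[n]|` of the generator indexed by `g`. -/
def gpar (M : ℕ) {N : ℕ} (g : Gen M N) : ℕ := (pa M g.1 + pa M g.2.1) % 2

/-- The free algebra on two copies of the generators (left = `t ⊗ 1`, right = `1 ⊗ t`). -/
abbrev F2 (M N : ℕ) := FreeAlgebra ℂ (Gen M N ⊕ Gen M N)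

noncomputable def embL (M N : ℕ) : F M N →ₐ[ℂ] F2 M N :=
  FreeAlgebra.lift ℂ fun g => FreeAlgebra.ι ℂ (Sum.inl g)

noncomputable def embR (M N : ℕ) : F M N →ₐ[ℂ] F2 M N :=
  FreeAlgebra.lift ℂ fun g => FreeAlgebra.ι ℂ (Sum.inr g)

/-- The defining relations of the ℤ₂-graded (super) tensor product `Y ⊗̂ Y`: each tensor
factor satisfies the defining relations of `Y(gl(M|N))`, and
`(x ⊗ 1)(1 ⊗ y) = (−1)^{|x||y|} (1 ⊗ y)(x ⊗ 1)` for homogeneous generators. -/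
inductive Rel2 (M N : ℕ) : F2 M N → F2 M N → Prop
  | left {x y : F M N} : Rel M N x y → Rel2 M N (embL M N x) (embL M N y)
  | right {x y : F M N} : Rel M N x y → Rel2 M N (embR M N x) (embR M N y)
  | cross (g g' : Gen M N) :
      Rel2 M N (FreeAlgebra.ι ℂ (Sum.inl g) * FreeAlgebra.ι ℂ (Sum.inr g'))
        (((-1 : ℂ) ^ (gpar M g * gpar M g')) •
          (FreeAlgebra.ι ℂ (Sum.inr g') * FreeAlgebra.ι ℂ (Sum.inl g)))

/-- The ℤ₂-graded (super) tensor product algebra `Y ⊗̂ Y`. -/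
abbrev YY (M N : ℕ) := RingQuot (Rel2 M N)

/-- `t^a_b[r] ⊗ 1 ∈ Y ⊗̂ Y`, extended to `r = 0` by `t^a_b[0] := (−1)^{[b]} δ^a_b · 1`. -/
noncomputable def tL (M N : ℕ) (a b : Fin (M + N)) (r : ℕ) : YY M N :=
  if r = 0 then ((-1 : ℂ) ^ pa M b) • (if a = b then 1 else 0)
  else RingQuot.mkAlgHom ℂ (Rel2 M N) (embL M N (T M N a b r))

/-- `1 ⊗ t^a_b[r] ∈ Y ⊗̂ Y`, extended to `r = 0` by `t^a_b[0] := (−1)^{[b]} δ^a_b · 1`. -/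
noncomputable def tR (M N : ℕ) (a b : Fin (M + N)) (r : ℕ) : YY M N :=
  if r = 0 then ((-1 : ℂ) ^ pa M b) • (if a = b then 1 else 0)
  else RingQuot.mkAlgHom ℂ (Rel2 M N) (embR M N (T M N a b r))

/-! ### The RTT relation and its stability under the graded matrix product -/

section Abstract

variable {I : Type*}

/-- The sign `(-1)^n` as an integer, acting by scalar multiplication on any ring. -/
def ep (n : ℕ) : ℤ := (-1) ^ n

lemma ep_add (m n : ℕ) : ep m * ep n = ep (m + n) := (pow_add _ _ _).symm

lemma ep_congr {m n : ℕ} (h : m % 2 = n % 2) : ep m = ep n := by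
  unfold ep
  rw [neg_one_pow_eq_pow_mod_two, h, ← neg_one_pow_eq_pow_mod_two]

lemma cpow_smul_eq {A : Type*} [Ring A] [Algebra ℂ A] (n : ℕ) (x : A) :
    ((-1 : ℂ) ^ n) • x = ep n • x := by
  unfold ep
  rw [← Int.cast_smul_eq_zsmul ℂ]
  simp

/-- Exponent of the sign of the supercommutator. -/
def e1 (p : I → ℕ) (a1 b1 a2 b2 : I) : ℕ := (p a1 + p b1) * (p a2 + p b2)

/-- Exponent of the sign of the quadratic term. -/
def e2 (p : I → ℕ) (a1 b1 a2 : I) : ℕ := p a1 * p a2 + p b1 * (p a1 + p a2)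

/-- Exponent of the sign in the coproduct. -/
def e3 (p : I → ℕ) (a b c : I) : ℕ := p c + (p b + p c) * (p c + p a)

/-- The RTT relation for `X = t(x)` and `X' = t(y)`, where `z` and `w` stand for the central
elements `y - x` and `x y`. The terms are arranged so that the left-hand side exchanges only upper
indices and the right-hand side only lower ones. -/
def RTT {B : Type*} [Ring B] (p : I → ℕ) (z w : B) (X X' : I → I → B) : Prop :=
  ∀ a1 b1 a2 b2,
    z * (X a1 b1 * X' a2 b2) - ep (e2 p a1 b1 a2) • (w * (X a2 b1 * X' a1 b2))
      = ep (e1 p a1 b1 a2 b2) • (z * (X' a2 b2 * X a1 b1))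
        - ep (e2 p a1 b1 a2) • (w * (X' a2 b1 * X a1 b2))

/-- The graded matrix product `∑_c ± L^c_b R^a_c` underlying the coproduct. -/
def comul {B : Type*} [Ring B] [Fintype I] (p : I → ℕ) (L R : I → I → B) (a b : I) : B :=
  ∑ c, ep (e3 p a b c) • (L c b * R a c)

/-- The families `R` and `L` supercommute, the `(a, b)` entry having parity `p a + p b`. -/
def SComm {B : Type*} [Ring B] (p : I → ℕ) (R L : I → I → B) : Prop :=
  ∀ a b c d, R a b * L c d = ep (e1 p a b c d) • (L c d * R a b)

lemma comul_mul {B : Type*} [Ring B] [Fintype I] {p : I → ℕ} {L R L' R' : I → I → B}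
    (h : SComm p R L') (q : B) (hq : ∀ b, q * b = b * q) (a1 b1 a2 b2 : I) :
    q * (comul p L R a1 b1 * comul p L' R' a2 b2) =
      ∑ c, ∑ d, ep (e3 p a1 b1 c + e3 p a2 b2 d + e1 p a1 c d b2) •
        ((L c b1 * L' d b2) * (q * (R a1 c * R' a2 d))) := by
  unfold comul
  rw [Finset.sum_mul_sum, Finset.mul_sum]
  refine Finset.sum_congr rfl fun c _ => ?_
  rw [Finset.mul_sum]
  refine Finset.sum_congr rfl fun d _ => ?_
  have h1 : L c b1 * R a1 c * (L' d b2 * R' a2 d)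
      = ep (e1 p a1 c d b2) • ((L c b1 * L' d b2) * (R a1 c * R' a2 d)) := by
    calc _ = L c b1 * (R a1 c * L' d b2) * R' a2 d := by simp only [mul_assoc]
      _ = _ := by rw [h]; simp only [mul_assoc, smul_mul_assoc, mul_smul_comm]
  rw [smul_mul_smul_comm, h1, smul_smul, ep_add, ep_add, mul_smul_comm, ← mul_assoc q, hq, mul_assoc]

/-- The RTT relation is stable under the graded matrix product of supercommuting solutions. -/
theorem RTT.comul {B : Type*} [Ring B] [Fintype I] {p : I → ℕ} (hp : ∀ i, p i = 0 ∨ p i = 1)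
    {z w : B} (hz : ∀ b, z * b = b * z) (hw : ∀ b, w * b = b * w) {L L' R R' : I → I → B}
    (hL : RTT p z w L L') (hR : RTT p z w R R') (h : SComm p R L') (h' : SComm p R' L) :
    RTT p z w (comul p L R) (comul p L' R') := by
  intro a1 b1 a2 b2
  rw [comul_mul h z hz, comul_mul h w hw, comul_mul h' z hz]
  rw [comul_mul (R := R') (L' := L) (by assumption) w hw]
  -- the common sign of the `(c, d)` summand
  let P : I → I → ℕ := fun c d => e3 p a1 b1 c + e3 p a2 b2 d + e1 p a1 c d b2
  have s1 : ∀ c d, ep (e2 p a1 b1 a2) * ep (e3 p a2 b1 c + e3 p a1 b2 d + e1 p a2 c d b2)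
      = ep (P c d) * ep (e2 p a1 c a2) := by
    intro c d
    simp only [P, ep_add]
    apply ep_congr
    unfold e1 e2 e3
    rcases hp a1 with h1 | h1 <;> rcases hp a2 with h2 | h2 <;> rcases hp b1 with h3 | h3 <;>
    rcases hp b2 with h4 | h4 <;> rcases hp c with h5 | h5 <;> rcases hp d with h6 | h6 <;>
    simp [h1, h2, h3, h4, h5, h6]
  have s2 : ∀ c d, ep (P d c) * ep (e2 p a1 d a2)
      = ep (P c d + e1 p a1 c a2 d) * ep (e2 p c b1 d) := by
    intro c d
    simp only [P, ep_add]
    apply ep_congr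
    unfold e1 e2 e3
    rcases hp a1 with h1 | h1 <;> rcases hp a2 with h2 | h2 <;> rcases hp b1 with h3 | h3 <;>
    rcases hp b2 with h4 | h4 <;> rcases hp c with h5 | h5 <;> rcases hp d with h6 | h6 <;>
    simp [h1, h2, h3, h4, h5, h6]
  have s3 : ∀ c d, ep (P c d + e1 p a1 c a2 d) * ep (e1 p c b1 d b2)
      = ep (e1 p a1 b1 a2 b2) * ep (e3 p a2 b2 d + e3 p a1 b1 c + e1 p a2 d c b1) := by
    intro c d
    simp only [P, ep_add]
    apply ep_congr
    unfold e1 e3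
    rcases hp a1 with h1 | h1 <;> rcases hp a2 with h2 | h2 <;> rcases hp b1 with h3 | h3 <;>
    rcases hp b2 with h4 | h4 <;> rcases hp c with h5 | h5 <;> rcases hp d with h6 | h6 <;>
    simp [h1, h2, h3, h4, h5, h6]
  have s4 : ∀ c d, ep (P c d + e1 p a1 c a2 d) * ep (e2 p c b1 d)
      = ep (e2 p a1 b1 a2) * ep (e3 p a2 b1 d + e3 p a1 b2 c + e1 p a2 d c b2) := by
    intro c d
    simp only [P, ep_add]
    apply ep_congr
    unfold e1 e2 e3
    rcases hp a1 with h1 | h1 <;> rcases hp a2 with h2 | h2 <;> rcases hp b1 with h3 | h3 <;>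
    rcases hp b2 with h4 | h4 <;> rcases hp c with h5 | h5 <;> rcases hp d with h6 | h6 <;>
    simp [h1, h2, h3, h4, h5, h6]
  have mv : ∀ q : B, (∀ b, q * b = b * q) → ∀ u v : B, u * (q * v) = (q * u) * v := by
    intro q hq u v
    rw [hq u, mul_assoc]
  calc _ = ∑ c, ∑ d, ep (P c d) • ((L c b1 * L' d b2) * (z * (R a1 c * R' a2 d)
              - ep (e2 p a1 c a2) • (w * (R a2 c * R' a1 d)))) := by
        simp only [Finset.smul_sum, ← Finset.sum_sub_distrib, smul_smul, mul_sub, smul_sub,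
          mul_smul_comm, s1, P]
    _ = ∑ c, ∑ d, ep (P c d) • ((L c b1 * L' d b2) *
          (ep (e1 p a1 c a2 d) • (z * (R' a2 d * R a1 c)))) -
        ∑ c, ∑ d, ep (P c d) • ((L c b1 * L' d b2) *
          (ep (e2 p a1 c a2) • (w * (R' a2 c * R a1 d)))) := by
        simp only [hR a1 _ a2 _, ← Finset.sum_sub_distrib, mul_sub, smul_sub]
    _ = ∑ c, ∑ d, ep (P c d) • ((L c b1 * L' d b2) *
          (ep (e1 p a1 c a2 d) • (z * (R' a2 d * R a1 c)))) -
        ∑ c, ∑ d, ep (P d c) • ((L d b1 * L' c b2) *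
          (ep (e2 p a1 d a2) • (w * (R' a2 d * R a1 c)))) := by
        congr 1
        exact Finset.sum_comm
    _ = ∑ c, ∑ d, ep (P c d + e1 p a1 c a2 d) • ((z * (L c b1 * L' d b2)
          - ep (e2 p c b1 d) • (w * (L d b1 * L' c b2))) * (R' a2 d * R a1 c)) := by
        simp only [← Finset.sum_sub_distrib, sub_mul, smul_sub, mul_smul_comm, smul_mul_assoc,
          smul_smul, s2, ep_add, mv z hz, mv w hw]
    _ = ∑ c, ∑ d, ep (P c d + e1 p a1 c a2 d) • ((ep (e1 p c b1 d b2) • (z * (L' d b2 * L c b1))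
          - ep (e2 p c b1 d) • (w * (L' d b1 * L c b2))) * (R' a2 d * R a1 c)) := by
        simp only [hL _ b1 _ b2]
    _ = _ := by
        rw [Finset.sum_comm, Finset.smul_sum, Finset.smul_sum, ← Finset.sum_sub_distrib]
        refine Finset.sum_congr rfl fun d _ => ?_
        rw [Finset.smul_sum, Finset.smul_sum, ← Finset.sum_sub_distrib]
        refine Finset.sum_congr rfl fun c _ => ?_
        simp only [sub_mul, smul_sub, smul_mul_assoc, smul_smul, s3, s4, mv z hz, mv w hw]

/-! ### Generating series and the closed commutator formula -/

/-- A double sequence satisfying the recursion `f (m+1) n - f m (n+1) = g m n` is the truncated sum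
of the alternating sequence `g`. -/
lemma sum_of_rec {A : Type*} [AddCommGroup A] (f g : ℕ → ℕ → A)
    (h0 : ∀ n, f 0 n = 0) (hg : ∀ n, g n n = 0) (hg' : ∀ m n, g m n + g n m = 0)
    (hf : ∀ m n, f (m + 1) n = f m (n + 1) + g m n) (m n : ℕ) :
    f m n = ∑ r ∈ Finset.range (min m n), g r (m + n - 1 - r) := by
  induction m generalizing n with
  | zero => simp [h0]
  | succ m ih =>
    rw [hf, ih]
    have e : m + (n + 1) - 1 = m + 1 + n - 1 := by omega
    rw [e]
    rcases lt_trichotomy m n with h | h | h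
    · rw [min_eq_left (by omega), min_eq_left (by omega), Finset.sum_range_succ,
        show m + 1 + n - 1 - m = n by omega]
    · subst h
      rw [min_eq_left (by omega), min_eq_right (by omega), hg, add_zero]
    · rw [min_eq_right (by omega), min_eq_right (by omega), Finset.sum_range_succ,
        show m + 1 + n - 1 - n = m by omega, add_assoc, hg', add_zero]

lemma rec_of_sum {A : Type*} [AddCommGroup A] (f g : ℕ → ℕ → A)
    (hg : ∀ n, g n n = 0) (hg' : ∀ m n, g m n + g n m = 0)
    (hf : ∀ m n, f m n = ∑ r ∈ Finset.range (min m n), g r (m + n - 1 - r)) (m n : ℕ) :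
    f (m + 1) n = f m (n + 1) + g m n := by
  rw [hf, hf]
  have e : m + (n + 1) - 1 = m + 1 + n - 1 := by omega
  rw [e]
  symm
  rcases lt_trichotomy m n with h | h | h
  · rw [min_eq_left (by omega), min_eq_left (by omega), Finset.sum_range_succ,
      show m + 1 + n - 1 - m = n by omega]
  · subst h
    rw [min_eq_left (by omega), min_eq_right (by omega), hg, add_zero]
  · rw [min_eq_right (by omega), min_eq_right (by omega), Finset.sum_range_succ,
      show m + 1 + n - 1 - n = m by omega, add_assoc, hg', add_zero]

variable {A : Type*} [Ring A]

open PowerSeries in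
/-- The series `∑ t[n] x^n` in `A⟦x⟧⟦y⟧`; the inner variable is `x`. -/
noncomputable def serX (t : I → I → ℕ → A) (a b : I) : A⟦X⟧⟦X⟧ :=
  PowerSeries.C (PowerSeries.mk (t a b))

open PowerSeries in
/-- The series `∑ t[n] y^n` in `A⟦x⟧⟦y⟧`; the outer variable is `y`. -/
noncomputable def serY (t : I → I → ℕ → A) (a b : I) : A⟦X⟧⟦X⟧ :=
  PowerSeries.map PowerSeries.C (PowerSeries.mk (t a b))

open PowerSeries in
/-- The central element `y - x`. -/
noncomputable def zz (A : Type*) [Ring A] : A⟦X⟧⟦X⟧ := PowerSeries.X - PowerSeries.C PowerSeries.X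

open PowerSeries in
/-- The central element `x y`. -/
noncomputable def ww (A : Type*) [Ring A] : A⟦X⟧⟦X⟧ := PowerSeries.X * PowerSeries.C PowerSeries.X

open PowerSeries in
lemma CX_comm (b : A⟦X⟧⟦X⟧) : PowerSeries.C PowerSeries.X * b = b * PowerSeries.C PowerSeries.X := by
  ext n : 1
  rw [PowerSeries.coeff_C_mul, PowerSeries.coeff_mul_C, PowerSeries.X_mul]

open PowerSeries in
lemma zz_comm (b : A⟦X⟧⟦X⟧) : zz A * b = b * zz A := by
  rw [zz, sub_mul, mul_sub, CX_comm, PowerSeries.X_mul]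

open PowerSeries in
lemma ww_comm (b : A⟦X⟧⟦X⟧) : ww A * b = b * ww A := by
  rw [ww, mul_assoc, CX_comm, ← mul_assoc, PowerSeries.X_mul, mul_assoc]

open PowerSeries in
lemma coeff_XY (t s : I → I → ℕ → A) (a b c d : I) (m n : ℕ) :
    coeff m (coeff n (serX t a b * serY s c d)) = t a b m * s c d n := by
  simp [serX, serY, PowerSeries.coeff_C_mul, PowerSeries.coeff_mul_C]

open PowerSeries in
lemma coeff_YX (t s : I → I → ℕ → A) (a b c d : I) (m n : ℕ) :
    coeff m (coeff n (serY s c d * serX t a b)) = s c d n * t a b m := by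
  simp [serX, serY, PowerSeries.coeff_C_mul, PowerSeries.coeff_mul_C]

/-- The commutator formula with the summand `r = 0` included, for all levels `m, n ≥ 0`. -/
def Closed (p : I → ℕ) (t : I → I → ℕ → A) : Prop :=
  ∀ a1 b1 a2 b2 m n,
    t a1 b1 m * t a2 b2 n - ep (e1 p a1 b1 a2 b2) • (t a2 b2 n * t a1 b1 m)
      = ∑ r ∈ Finset.range (min m n), ep (e2 p a1 b1 a2) •
          (t a2 b1 r * t a1 b2 (m + n - 1 - r) - t a2 b1 (m + n - 1 - r) * t a1 b2 r)

open PowerSeries in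
lemma coeff_zz (b : A⟦X⟧⟦X⟧) (m n : ℕ) : coeff (m + 1) (coeff (n + 1) (zz A * b))
    = coeff (m + 1) (coeff n b) - coeff m (coeff (n + 1) b) := by
  simp [zz, sub_mul, PowerSeries.coeff_C_mul, PowerSeries.coeff_succ_X_mul]

open PowerSeries in
lemma coeff_zz0 (b : A⟦X⟧⟦X⟧) (n : ℕ) : coeff 0 (coeff (n + 1) (zz A * b))
    = coeff 0 (coeff n b) := by
  simp [zz, sub_mul, PowerSeries.coeff_C_mul, PowerSeries.coeff_succ_X_mul]

open PowerSeries in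
lemma coeff_zz1 (b : A⟦X⟧⟦X⟧) (m : ℕ) : coeff (m + 1) (coeff 0 (zz A * b))
    = - coeff m (coeff 0 b) := by
  simp only [zz, sub_mul, map_sub, PowerSeries.coeff_C_mul, PowerSeries.coeff_succ_X_mul,
    PowerSeries.coeff_zero_X_mul]
  simp

open PowerSeries in
lemma coeff_zz2 (b : A⟦X⟧⟦X⟧) : coeff 0 (coeff 0 (zz A * b)) = 0 := by
  simp [zz, sub_mul]

open PowerSeries in
lemma coeff_ww (b : A⟦X⟧⟦X⟧) (m n : ℕ) : coeff (m + 1) (coeff (n + 1) (ww A * b))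
    = coeff m (coeff n b) := by
  rw [ww, mul_assoc, PowerSeries.coeff_succ_X_mul, PowerSeries.coeff_C_mul,
    PowerSeries.coeff_succ_X_mul]

open PowerSeries in
lemma coeff_ww0 (b : A⟦X⟧⟦X⟧) (n : ℕ) : coeff 0 (coeff n (ww A * b)) = 0 := by
  rw [ww, ← CX_comm, mul_assoc, PowerSeries.coeff_C_mul, PowerSeries.coeff_zero_X_mul]

open PowerSeries in
lemma coeff_ww1 (b : A⟦X⟧⟦X⟧) (n : ℕ) : coeff n (coeff 0 (ww A * b)) = 0 := by
  rw [ww, mul_assoc, PowerSeries.coeff_zero_X_mul, map_zero]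

open PowerSeries in
/-- Comparing coefficients of `x^m y^n`, the RTT relation for the generating series is the
recursion solved by `sum_of_rec`. -/
theorem rtt_iff (p : I → ℕ) (t : I → I → ℕ → A) :
    RTT p (zz A) (ww A) (serX t) (serY t) ↔ Closed p t := by
  constructor
  · intro h a1 b1 a2 b2 m n
    refine sum_of_rec (fun m n => t a1 b1 m * t a2 b2 n
        - ep (e1 p a1 b1 a2 b2) • (t a2 b2 n * t a1 b1 m))
      (fun r s => ep (e2 p a1 b1 a2) • (t a2 b1 r * t a1 b2 s - t a2 b1 s * t a1 b2 r))
      ?_ ?_ ?_ ?_ m n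
    · intro n
      have := congrArg (fun b => coeff 0 (coeff (n + 1) b)) (h a1 b1 a2 b2)
      simp only [map_sub, map_zsmul, coeff_zz0, coeff_ww0, coeff_XY, coeff_YX, smul_zero,
        sub_zero] at this
      rw [this, sub_self]
    · intro n
      simp
    · intro m n
      rw [← smul_add]
      simp
    · intro m n
      have := congrArg (fun b => coeff (m + 1) (coeff (n + 1) b)) (h a1 b1 a2 b2)
      simp only [map_sub, map_zsmul, coeff_zz, coeff_ww, coeff_XY, coeff_YX, smul_sub] at this
      simp only [smul_sub]
      rw [← sub_eq_zero] at this ⊢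
      rw [← this]
      abel
  · intro h a1 b1 a2 b2
    have key := rec_of_sum (fun m n => t a1 b1 m * t a2 b2 n
        - ep (e1 p a1 b1 a2 b2) • (t a2 b2 n * t a1 b1 m))
      (fun r s => ep (e2 p a1 b1 a2) • (t a2 b1 r * t a1 b2 s - t a2 b1 s * t a1 b2 r))
      (by simp) (by intro m n; rw [← smul_add]; simp) (h a1 b1 a2 b2)
    have k0 := fun n => h a1 b1 a2 b2 0 n
    have k1 := fun n => h a1 b1 a2 b2 n 0
    simp only [Nat.zero_min, Nat.min_zero, Finset.range_zero, Finset.sum_empty] at k0 k1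
    ext n m
    rcases n with _ | n <;> rcases m with _ | m <;>
      simp only [map_sub, map_zsmul, coeff_zz, coeff_zz0, coeff_zz1, coeff_zz2, coeff_ww,
        coeff_ww0, coeff_ww1, coeff_XY, coeff_YX, smul_zero, sub_zero]
    · rw [smul_neg, sub_eq_zero.mp (k1 m)]
    · rw [sub_eq_zero.mp (k0 n)]
    · have := key m n
      simp only [smul_sub] at this ⊢
      rw [← sub_eq_zero] at this ⊢
      rw [← this]
      abel

/-- The convention `t^a_b[0] = (-1)^{[b]} δ^a_b`. -/
def Unit0 [DecidableEq I] (p : I → ℕ) (t : I → I → ℕ → A) : Prop :=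
  ∀ a b, t a b 0 = ep (p b) • (if a = b then 1 else 0)

/-- The right-hand side of the defining relations of the super Yangian. -/
def rhs [DecidableEq I] (p : I → ℕ) (t : I → I → ℕ → A) (a1 b1 a2 b2 : I) (m n : ℕ) : A :=
  (if b1 = a2 then t a1 b2 (m + n - 1) else 0)
    - ep (e1 p a1 b1 a2 b2) • (if b2 = a1 then t a2 b1 (m + n - 1) else 0)
    + ep (e2 p a1 b1 a2) • ∑ r ∈ Finset.Ico 1 (min m n),
        (t a2 b1 r * t a1 b2 (m + n - 1 - r) - t a2 b1 (m + n - 1 - r) * t a1 b2 r)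

/-- The two linear terms of the defining relations are the summand `r = 0`. -/
lemma rhs_eq [DecidableEq I] {p : I → ℕ} (hp : ∀ i, p i = 0 ∨ p i = 1) {t : I → I → ℕ → A}
    (h0 : Unit0 p t) (a1 b1 a2 b2 : I) {m n : ℕ} (hm : 1 ≤ m) (hn : 1 ≤ n) :
    rhs p t a1 b1 a2 b2 m n = ∑ r ∈ Finset.range (min m n), ep (e2 p a1 b1 a2) •
          (t a2 b1 r * t a1 b2 (m + n - 1 - r) - t a2 b1 (m + n - 1 - r) * t a1 b2 r) := by
  rw [rhs, ← Finset.smul_sum, Finset.range_eq_Ico, Finset.sum_eq_sum_Ico_succ_bot (a := 0) (by omega),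
    smul_add]
  congr 1
  simp only [tsub_zero, smul_sub, h0 a2 b1, h0 a1 b2, smul_mul_assoc, mul_smul_comm, smul_smul]
  congr 1
  · by_cases h : b1 = a2
    · subst h
      have : ep (e2 p a1 b1 b1) * ep (p b1) = ep 0 := by
        rw [ep_add]
        apply ep_congr
        unfold e2
        rcases hp a1 with h1 | h1 <;> rcases hp b1 with h2 | h2 <;> simp [h1, h2]
      rw [this]
      simp [ep]
    · simp [h, Ne.symm h]
  · by_cases h : b2 = a1
    · subst h
      have : ep (e2 p b2 b1 a2) * ep (p b2) = ep (e1 p b2 b1 a2 b2) := by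
        rw [ep_add]
        apply ep_congr
        unfold e1 e2
        rcases hp a2 with h1 | h1 <;> rcases hp b1 with h2 | h2 <;>
          rcases hp b2 with h3 | h3 <;> simp [h1, h2, h3]
      simp [this]
    · simp [h, Ne.symm h]

/-- For a family with the standard level `0`, the closed commutator formula amounts to the defining
relations of the super Yangian. -/
lemma closed_iff [DecidableEq I] {p : I → ℕ} (hp : ∀ i, p i = 0 ∨ p i = 1) {t : I → I → ℕ → A}
    (h0 : Unit0 p t) : Closed p t ↔ ∀ a1 b1 a2 b2 m n, 1 ≤ m → 1 ≤ n →
      t a1 b1 m * t a2 b2 n - ep (e1 p a1 b1 a2 b2) • (t a2 b2 n * t a1 b1 m)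
        = rhs p t a1 b1 a2 b2 m n := by
  constructor
  · intro h a1 b1 a2 b2 m n hm hn
    rw [h, rhs_eq hp h0 _ _ _ _ hm hn]
  · intro h a1 b1 a2 b2 m n
    -- the scalars at level `0` supercommute with everything
    have hz : ∀ (a b c d : I) (x : A), t a b 0 * x - ep (e1 p a b c d) • (x * t a b 0) = 0 := by
      intro a b c d x
      rw [h0]
      by_cases hab : a = b
      · subst hab
        have : ep (e1 p a a c d) = 1 := by
          rw [show (1 : ℤ) = ep 0 from rfl]
          apply ep_congr
          unfold e1
          rw [← two_mul, mul_assoc]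
          simp
        simp only [this, one_smul, if_true, smul_mul_assoc, one_mul, mul_smul_comm, mul_one,
          sub_self]
      · simp [hab]
    rcases Nat.eq_zero_or_pos m with rfl | hm
    · rw [hz]
      simp
    rcases Nat.eq_zero_or_pos n with rfl | hn
    · have e : ep (e1 p a2 b2 a1 b1) = ep (e1 p a1 b1 a2 b2) := by
        unfold e1
        rw [mul_comm]
      have := hz a2 b2 a1 b1 (t a1 b1 m)
      have u : ep (e1 p a1 b1 a2 b2) * ep (e1 p a1 b1 a2 b2) = 1 := by
        unfold ep
        rw [← mul_pow]
        simp
      rw [sub_eq_zero, e] at this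
      rw [this, smul_smul, u]
      simp
    rw [h _ _ _ _ _ _ hm hn, rhs_eq hp h0 _ _ _ _ hm hn]

/-! ### The coproduct of coefficient families -/

/-- The coefficients of the coproduct series. -/
def cop [Fintype I] (p : I → ℕ) (L R : I → I → ℕ → A) (a b : I) (n : ℕ) : A :=
  ∑ c, ∑ r ∈ Finset.range (n + 1), ep (e3 p a b c) • (L c b r * R a c (n - r))

lemma mk_cop [Fintype I] (p : I → ℕ) (L R : I → I → ℕ → A) (a b : I) :
    PowerSeries.mk (cop p L R a b)
      = comul p (fun a b => PowerSeries.mk (L a b)) (fun a b => PowerSeries.mk (R a b)) a b := by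
  ext n
  simp only [comul, cop, PowerSeries.coeff_mk, map_sum, map_zsmul, PowerSeries.coeff_mul]
  refine Finset.sum_congr rfl fun c _ => ?_
  rw [Finset.Nat.sum_antidiagonal_eq_sum_range_succ_mk, Finset.smul_sum]

lemma serX_cop [Fintype I] (p : I → ℕ) (L R : I → I → ℕ → A) :
    serX (cop p L R) = comul p (serX L) (serX R) := by
  ext1 a
  ext1 b
  rw [serX, mk_cop]
  simp only [comul, map_sum, map_zsmul, map_mul]
  rfl

lemma serY_cop [Fintype I] (p : I → ℕ) (L R : I → I → ℕ → A) :
    serY (cop p L R) = comul p (serY L) (serY R) := by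
  ext1 a
  ext1 b
  rw [serY, mk_cop]
  simp only [comul, map_sum, map_zsmul, map_mul]
  rfl

theorem closed_cop [Fintype I] {p : I → ℕ} (hp : ∀ i, p i = 0 ∨ p i = 1) {L R : I → I → ℕ → A}
    (hL : Closed p L) (hR : Closed p R)
    (h : ∀ a b c d m n, R a b m * L c d n = ep (e1 p a b c d) • (L c d n * R a b m)) :
    Closed p (cop p L R) := by
  rw [← rtt_iff, serX_cop, serY_cop]
  refine RTT.comul hp zz_comm ww_comm ((rtt_iff p L).2 hL) ((rtt_iff p R).2 hR) ?_ ?_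
  · intro a b c d
    ext n m
    simp only [map_zsmul, coeff_XY, coeff_YX, h]
  · intro a b c d
    ext n m
    simp only [map_zsmul, coeff_XY, coeff_YX, h]

lemma unit0_cop [Fintype I] [DecidableEq I] {p : I → ℕ} (hp : ∀ i, p i = 0 ∨ p i = 1)
    {L R : I → I → ℕ → A} (hL : Unit0 p L) (hR : Unit0 p R) : Unit0 p (cop p L R) := by
  intro a b
  have hL' := fun c => hL c b
  have hR' := fun c => hR a c
  simp only [cop, zero_add, Finset.range_one, Finset.sum_singleton, Nat.sub_zero, hL', hR']
  rw [Finset.sum_eq_single b]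
  · by_cases hab : a = b
    · subst hab
      rcases hp a with h | h <;> simp [h, ep, e3]
    · simp [hab]
  · intro c _ hc
    simp [hc]
  · simp

end Abstract

/-! ### The families `tL` and `tR` in the super tensor product -/

lemma pa_cases (M : ℕ) {k : ℕ} (a : Fin k) : pa M a = 0 ∨ pa M a = 1 := by
  unfold pa
  split <;> simp

lemma unit0_tL (M N : ℕ) : Unit0 (pa M) (tL M N) := by
  intro a b
  rw [tL, if_pos rfl]
  exact cpow_smul_eq (A := YY M N) _ _

lemma unit0_tR (M N : ℕ) : Unit0 (pa M) (tR M N) := by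
  intro a b
  rw [tR, if_pos rfl]
  exact cpow_smul_eq (A := YY M N) _ _

/-- An algebra map `φ` sending `t^a_b[n]`, `n ≥ 1`, to `s a b n` turns the two sides of a defining
relation into the two sides of the same relation for `s`. -/
lemma map_rel {M N : ℕ} {A : Type*} [Ring A] [Algebra ℂ A] (φ : F M N →ₐ[ℂ] A)
    (s : Fin (M + N) → Fin (M + N) → ℕ → A)
    (hs : ∀ a b n, 1 ≤ n → φ (T M N a b n) = s a b n)
    (a1 b1 a2 b2 : Fin (M + N)) (m n : ℕ) (hm : 1 ≤ m) (hn : 1 ≤ n) :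
    φ (T M N a1 b1 m * T M N a2 b2 n - sgn1 M a1 b1 a2 b2 • (T M N a2 b2 n * T M N a1 b1 m))
      = s a1 b1 m * s a2 b2 n - ep (e1 (pa M) a1 b1 a2 b2) • (s a2 b2 n * s a1 b1 m) ∧
    φ ((if b1 = a2 then T M N a1 b2 (m + n - 1) else 0)
          - sgn1 M a1 b1 a2 b2 • (if b2 = a1 then T M N a2 b1 (m + n - 1) else 0)
          + sgn2 M a1 b1 a2 •
              ∑ r ∈ Finset.Ico 1 (min m n),
                (T M N a2 b1 r * T M N a1 b2 (m + n - 1 - r)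
                  - T M N a2 b1 (m + n - 1 - r) * T M N a1 b2 r))
      = rhs (pa M) s a1 b1 a2 b2 m n := by
  constructor
  · rw [map_sub, map_smul, map_mul, map_mul, hs _ _ _ hm, hs _ _ _ hn, sgn1, cpow_smul_eq]
    rfl
  · rw [map_add, map_sub, map_smul, map_smul, map_sum, apply_ite φ, apply_ite φ, map_zero,
      hs _ _ (m + n - 1) (by omega), hs _ _ (m + n - 1) (by omega), sgn1, sgn2, cpow_smul_eq,
      cpow_smul_eq]
    unfold rhs e1 e2
    congr 2
    refine Finset.sum_congr rfl fun r hr => ?_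
    rw [Finset.mem_Ico] at hr
    have : r < m := lt_of_lt_of_le hr.2 (min_le_left _ _)
    have : r < n := lt_of_lt_of_le hr.2 (min_le_right _ _)
    simp only [map_sub, map_mul, hs _ _ r hr.1, hs _ _ (m + n - 1 - r) (by omega)]

lemma closed_tL (M N : ℕ) : Closed (pa M) (tL M N) := by
  rw [closed_iff (pa_cases M) (unit0_tL M N)]
  intro a1 b1 a2 b2 m n hm hn
  have hs : ∀ a b n, 1 ≤ n →
      ((RingQuot.mkAlgHom ℂ (Rel2 M N)).comp (embL M N)) (T M N a b n) = tL M N a b n := by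
    intro a b n hn
    rw [tL, if_neg (by omega), AlgHom.comp_apply]
  obtain ⟨h1, h2⟩ := map_rel _ (tL M N) hs a1 b1 a2 b2 m n hm hn
  rw [← h1, ← h2, AlgHom.comp_apply, AlgHom.comp_apply]
  exact RingQuot.mkAlgHom_rel ℂ (Rel2.left (Rel.defining a1 b1 a2 b2 m n hm hn))

lemma closed_tR (M N : ℕ) : Closed (pa M) (tR M N) := by
  rw [closed_iff (pa_cases M) (unit0_tR M N)]
  intro a1 b1 a2 b2 m n hm hn
  have hs : ∀ a b n, 1 ≤ n →
      ((RingQuot.mkAlgHom ℂ (Rel2 M N)).comp (embR M N)) (T M N a b n) = tR M N a b n := by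
    intro a b n hn
    rw [tR, if_neg (by omega), AlgHom.comp_apply]
  obtain ⟨h1, h2⟩ := map_rel _ (tR M N) hs a1 b1 a2 b2 m n hm hn
  rw [← h1, ← h2, AlgHom.comp_apply, AlgHom.comp_apply]
  exact RingQuot.mkAlgHom_rel ℂ (Rel2.right (Rel.defining a1 b1 a2 b2 m n hm hn))

lemma ep_e1_self {k : ℕ} (p : Fin k → ℕ) (a b c : Fin k) :
    ep (e1 p a a b c) = 1 ∧ ep (e1 p b c a a) = 1 := by
  unfold ep e1
  constructor <;> apply Even.neg_one_pow
  · exact (Even.add_self _).mul_right _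
  · exact (Even.add_self _).mul_left _

/-- The cross relation of `Y ⊗̂ Y`, extended to level `0`. -/
lemma tR_mul_tL (M N : ℕ) (a b c d : Fin (M + N)) (m n : ℕ) :
    tR M N a b m * tL M N c d n
      = ep (e1 (pa M) a b c d) • (tL M N c d n * tR M N a b m) := by
  rcases Nat.eq_zero_or_pos m with rfl | hm
  · rw [unit0_tR]
    by_cases h : a = b
    · subst h
      simp only [(ep_e1_self (pa M) a c d).1, one_smul, if_true, smul_mul_assoc, one_mul,
        mul_smul_comm, mul_one]
    · simp [h]
  rcases Nat.eq_zero_or_pos n with rfl | hn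
  · rw [unit0_tL]
    by_cases h : c = d
    · subst h
      simp only [(ep_e1_self (pa M) c a b).2, one_smul, if_true, smul_mul_assoc, one_mul,
        mul_smul_comm, mul_one]
    · simp [h]
  have h := RingQuot.mkAlgHom_rel ℂ (Rel2.cross (M := M) (N := N) (c, d, n - 1) (a, b, m - 1))
  have hL : tL M N c d n
      = RingQuot.mkAlgHom ℂ (Rel2 M N) (FreeAlgebra.ι ℂ (Sum.inl (c, d, n - 1))) := by
    rw [tL, if_neg (by omega), T, embL, FreeAlgebra.lift_ι_apply]
  have hR : tR M N a b m
      = RingQuot.mkAlgHom ℂ (Rel2 M N) (FreeAlgebra.ι ℂ (Sum.inr (a, b, m - 1))) := by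
    rw [tR, if_neg (by omega), T, embR, FreeAlgebra.lift_ι_apply]
  rw [map_mul, map_smul, map_mul, ← hL, ← hR] at h
  replace h := h.trans (cpow_smul_eq (A := YY M N) _ _)
  have e : ep (e1 (pa M) a b c d) * ep (gpar M (N := N) (c, d, n - 1) * gpar M (N := N) (a, b, m - 1))
      = 1 := by
    rw [ep_add, show (1 : ℤ) = ep 0 from rfl]
    apply ep_congr
    unfold e1 gpar
    rcases pa_cases M a with h1 | h1 <;> rcases pa_cases M b with h2 | h2 <;>
      rcases pa_cases M c with h3 | h3 <;> rcases pa_cases M d with h4 | h4 <;>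
      simp [h1, h2, h3, h4]
  rw [h, smul_smul, e, one_smul]

/-- **Comultiplication**: the assignment
`Δ(t^a_b[n]) = ∑_{c} ∑_{r=0}^{n} (−1)^{[c] + ([b]+[c])([c]+[a])} t^c_b[r] ⊗ t^a_c[n-r]`
extends to a unital `ℂ`-algebra homomorphism `Δ : Y(gl(M|N)) → Y ⊗̂ Y`. -/
theorem comultiplication (M N : ℕ) (hMN : 1 ≤ M + N) :
    ∃ Δ : Y M N →ₐ[ℂ] YY M N,
      ∀ (a b : Fin (M + N)) (n : ℕ), 1 ≤ n →
        Δ (t M N a b n)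
          = ∑ c : Fin (M + N), ∑ r ∈ Finset.range (n + 1),
              ((-1 : ℂ) ^ (pa M c + (pa M b + pa M c) * (pa M c + pa M a))) •
                (tL M N c b r * tR M N a c (n - r)) := by
  let D := cop (pa M) (tL M N) (tR M N)
  have hD : Closed (pa M) D :=
    closed_cop (pa_cases M) (closed_tL M N) (closed_tR M N) (tR_mul_tL M N)
  have h0 : Unit0 (pa M) D := unit0_cop (pa_cases M) (unit0_tL M N) (unit0_tR M N)
  let φ : F M N →ₐ[ℂ] YY M N := FreeAlgebra.lift ℂ fun g => D g.1 g.2.1 (g.2.2 + 1)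
  have hφ : ∀ a b n, 1 ≤ n → φ (T M N a b n) = D a b n := by
    intro a b n hn
    simp only [φ, T, FreeAlgebra.lift_ι_apply, Nat.sub_add_cancel hn]
  refine ⟨RingQuot.liftAlgHom ℂ ⟨φ, ?_⟩, ?_⟩
  · rintro _ _ ⟨a1, b1, a2, b2, m, n, hm, hn⟩
    obtain ⟨h1, h2⟩ := map_rel φ D hφ a1 b1 a2 b2 m n hm hn
    rw [h1, h2]
    exact (closed_iff (pa_cases M) h0).1 hD a1 b1 a2 b2 m n hm hn
  · intro a b n hn
    rw [t, RingQuot.liftAlgHom_mkAlgHom_apply, hφ a b n hn]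
    exact Finset.sum_congr rfl fun c _ => Finset.sum_congr rfl fun r _ => (cpow_smul_eq _ _).symm

end SY
end

section
/- Every finite-dimensional irreducible Y(gl(M|N))-module V contains a maximal vector, and the maximal vector is unique up to scalar multiples. -/
/-!
Write `t^a_b[n]` with `a < b`, `a = b`, `a > b` as raising, diagonal and lowering generators, and
put `H = ∑ₐ a · t^a_a[1]`, so that `[H, t^a_b[n]] = (a - b) t^a_b[n]`.

*Existence.*  An eigenvector of `H` whose eigenvalue has minimal real part is killed by all raising
generators, so the space `V⁰` of vectors killed by these is nonzero.  The defining relations show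
that the diagonal generators preserve `V⁰` and commute on it, hence they have a common eigenvector
there, and this is a maximal vector.

*Uniqueness.*  Filter the vectors obtained from a maximal vector `v` by giving `t^a_b[n]` degree
`n`.  Every term on the right-hand side of the defining relations has degree at most `m + n - 1`,
so generators commute up to sign modulo lower degree.  A word applied to `v` that ends in a
lowering generator can thus be rewritten, modulo lower degree, to start with it; a word that ends
in another generator is a multiple of a shorter one.  By induction on the degree and irreducibility,
`V = ℂ v + N⁻V`, where `N⁻V` is the sum of the ranges of the lowering generators
(`span_sup_lowRange_eq_top`).  If `μ` is an eigenvalue of `H` with minimal real part, `N⁻V` lies in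
the sum `K` of the generalized eigenspaces for the other eigenvalues, so `V = ℂ v + K`.  This forces
every maximal vector into the generalized `μ`-eigenspace, which meets `K` trivially, and therefore
into `ℂ v`.
-/

open scoped BigOperators TensorProduct

namespace SY

section Auxiliary

variable {M N : ℕ} {V : Type} [AddCommGroup V] [Module ℂ V]

/-- The operator on `V` by which the generator `t^a_b[n]` acts. -/
noncomputable def act (ρ : Y M N →ₐ[ℂ] Module.End ℂ V) (a b : Fin (M + N)) (n : ℕ) :
    Module.End ℂ V := ρ (t M N a b n)

theorem act_rel (ρ : Y M N →ₐ[ℂ] Module.End ℂ V) (a1 b1 a2 b2 : Fin (M + N)) {m n : ℕ}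
    (hm : 1 ≤ m) (hn : 1 ≤ n) (x : V) :
    act ρ a1 b1 m (act ρ a2 b2 n x) - sgn1 M a1 b1 a2 b2 • act ρ a2 b2 n (act ρ a1 b1 m x)
      = (if b1 = a2 then act ρ a1 b2 (m + n - 1) x else 0)
        - sgn1 M a1 b1 a2 b2 • (if b2 = a1 then act ρ a2 b1 (m + n - 1) x else 0)
        + sgn2 M a1 b1 a2 • ∑ r ∈ Finset.Ico 1 (min m n),
            (act ρ a2 b1 r (act ρ a1 b2 (m + n - 1 - r) x)
              - act ρ a2 b1 (m + n - 1 - r) (act ρ a1 b2 r x)) := by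
  have h := congrArg (fun y => ρ y x)
    (RingQuot.mkAlgHom_rel ℂ (Rel.defining (M := M) (N := N) a1 b1 a2 b2 m n hm hn))
  simp only [map_sub, map_add, map_mul, map_smul, map_sum, apply_ite (RingQuot.mkAlgHom ℂ (Rel M N)),
    apply_ite ρ, map_zero, LinearMap.sub_apply, LinearMap.add_apply, LinearMap.smul_apply,
    Module.End.mul_apply, LinearMap.sum_apply] at h
  have e1 : ∀ (p : Prop) [Decidable p] (f : Module.End ℂ V),
      (if p then f else 0) x = if p then f x else 0 := by
    intro p _ f; split_ifs <;> simp
  simp only [e1] at h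
  exact h

theorem sgn1_diag_left (a c d : Fin (M + N)) : sgn1 M a a c d = 1 := by
  unfold sgn1
  rw [← two_mul, mul_assoc, pow_mul]; simp

theorem sgn1_diag_right (a c d : Fin (M + N)) : sgn1 M c d a a = 1 := by
  unfold sgn1
  rw [← two_mul, mul_left_comm, pow_mul]; simp

/-! ### The grading operator -/

/-- `H = ∑ₐ a · t^a_a[1]`, with `0`-based `a`. -/
noncomputable def gradOp (ρ : Y M N →ₐ[ℂ] Module.End ℂ V) : Module.End ℂ V :=
  ∑ a : Fin (M + N), ((a : ℕ) : ℂ) • act ρ a a 1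

theorem gradOp_comm (ρ : Y M N →ₐ[ℂ] Module.End ℂ V) (a b : Fin (M + N)) {n : ℕ} (hn : 1 ≤ n)
    (x : V) :
    gradOp ρ (act ρ a b n x)
      = act ρ a b n (gradOp ρ x) + (((a : ℕ) : ℂ) - ((b : ℕ) : ℂ)) • act ρ a b n x := by
  have h : ∀ c : Fin (M + N), act ρ c c 1 (act ρ a b n x)
      = act ρ a b n (act ρ c c 1 x) + ((if c = a then act ρ a b n x else 0)
        - (if c = b then act ρ a b n x else 0)) := by
    intro c
    have h := act_rel ρ c c a b (le_refl 1) hn x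
    rw [sgn1_diag_left, Finset.Ico_eq_empty (by omega)] at h
    simp only [one_smul, Finset.sum_empty, smul_zero, add_zero, Nat.add_sub_cancel_left] at h
    rw [sub_eq_iff_eq_add'] at h
    rw [h]
    by_cases h1 : c = a <;> by_cases h2 : c = b
    · subst h1; simp [h2]
    · subst h1; simp [h2, Ne.symm h2]
    · subst h2; simp [h1]
    · simp [h1, h2, Ne.symm h2]
  simp only [gradOp, LinearMap.sum_apply, LinearMap.smul_apply, h, map_sum, map_smul, smul_add,
    Finset.sum_add_distrib, smul_sub, Finset.sum_sub_distrib, smul_ite, smul_zero,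
    Finset.sum_ite_eq', Finset.mem_univ, if_true, sub_smul]

/-- An eigenvalue of minimal real part: subtracting a positive real number leaves the spectrum. -/
theorem exists_minimal_eigenvalue [FiniteDimensional ℂ V] [Nontrivial V] (f : Module.End ℂ V) :
    ∃ μ : ℂ, f.HasEigenvalue μ ∧ ∀ c : ℝ, 0 < c → ¬ f.HasEigenvalue (μ - c) := by
  obtain ⟨μ₀, h₀⟩ := Module.End.exists_eigenvalue f
  have hfin : {μ | f.HasEigenvalue μ}.Finite := f.finite_hasEigenvalue
  obtain ⟨μ, hμ, hmin⟩ := Set.exists_min_image _ Complex.re hfin ⟨μ₀, h₀⟩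
  refine ⟨μ, hμ, fun c hc hcon => ?_⟩
  have := hmin _ hcon
  simp at this
  linarith

/-! ### Existence -/

/-- The space `V⁰` of vectors killed by all raising generators. -/
noncomputable def singular (ρ : Y M N →ₐ[ℂ] Module.End ℂ V) : Submodule ℂ V :=
  ⨅ (a : Fin (M + N)) (b : Fin (M + N)) (_ : a < b) (n : ℕ) (_ : 1 ≤ n),
    LinearMap.ker (act ρ a b n)

theorem mem_singular {ρ : Y M N →ₐ[ℂ] Module.End ℂ V} {x : V} :
    x ∈ singular ρ ↔ ∀ a b : Fin (M + N), a < b → ∀ n : ℕ, 1 ≤ n → act ρ a b n x = 0 := by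
  simp [singular, Submodule.mem_iInf]

theorem singular_ne_bot [FiniteDimensional ℂ V] [Nontrivial V]
    (ρ : Y M N →ₐ[ℂ] Module.End ℂ V) : ∃ x ∈ singular ρ, x ≠ 0 := by
  obtain ⟨μ, hμ, hmin⟩ := exists_minimal_eigenvalue (gradOp ρ)
  obtain ⟨x, hx⟩ := hμ.exists_hasEigenvector
  refine ⟨x, mem_singular.2 fun a b hab n hn => ?_, hx.2⟩
  by_contra hne
  have hab' : (0 : ℝ) < ((b : ℕ) : ℝ) - ((a : ℕ) : ℝ) := by
    have : ((a : ℕ) : ℝ) < ((b : ℕ) : ℝ) := by exact_mod_cast hab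
    linarith
  refine hmin _ hab' (Module.End.hasEigenvalue_of_hasEigenvector (x := act ρ a b n x)
    ⟨Module.End.mem_eigenspace_iff.2 ?_, hne⟩)
  rw [gradOp_comm ρ a b hn, hx.apply_eq_smul, map_smul, ← add_smul]
  congr 1
  push_cast
  ring

/-- The diagonal generators preserve `V⁰`.  In each case the defining relation is used in the order
of the factors for which its quadratic terms end in raising generators. -/
theorem act_diag_mem_singular (ρ : Y M N →ₐ[ℂ] Module.End ℂ V) (c : Fin (M + N)) {n : ℕ}
    (hn : 1 ≤ n) {x : V} (hx : x ∈ singular ρ) : act ρ c c n x ∈ singular ρ := by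
  rw [mem_singular] at hx ⊢
  intro a b hab m hm
  have hsum : ∀ (p q r s : Fin (M + N)), p < q → ∀ m n : ℕ, 1 ≤ m → 1 ≤ n →
      ∑ k ∈ Finset.Ico 1 (min m n), (act ρ r s k (act ρ p q (m + n - 1 - k) x)
        - act ρ r s (m + n - 1 - k) (act ρ p q k x)) = 0 := by
    intro p q r s hpq m n _ _
    refine Finset.sum_eq_zero fun k hk => ?_
    rw [Finset.mem_Ico] at hk
    rw [hx p q hpq _ (by omega), hx p q hpq _ (by omega)]
    simp
  by_cases hcb : c < b
  · have h := act_rel ρ c c a b hn hm x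
    rw [sgn1_diag_left, hsum c b a c hcb n m hn hm, hx a b hab m hm, hx c b hcb _ (by omega),
      if_neg hcb.ne'] at h
    simpa using h
  · have hac : a < c := lt_of_lt_of_le hab (not_lt.1 hcb)
    have h := act_rel ρ a b c c hm hn x
    rw [sgn1_diag_right, hsum a c c b hac m n hm hn, hx a b hab m hm, hx a c hac _ (by omega),
      if_neg hac.ne'] at h
    simpa using h

theorem act_diag_comm (ρ : Y M N →ₐ[ℂ] Module.End ℂ V) (a b : Fin (M + N)) {m n : ℕ}
    (hm : 1 ≤ m) (hn : 1 ≤ n) {x : V} (hx : x ∈ singular ρ) :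
    act ρ a a m (act ρ b b n x) = act ρ b b n (act ρ a a m x) := by
  have key : ∀ (a b : Fin (M + N)) (m n : ℕ), 1 ≤ m → 1 ≤ n → a < b →
      act ρ a a m (act ρ b b n x) = act ρ b b n (act ρ a a m x) := by
    intro a b m n hm hn hab
    have h := act_rel ρ a a b b hm hn x
    rw [sgn1_diag_left, if_neg hab.ne, if_neg hab.ne', Finset.sum_eq_zero] at h
    · simpa [sub_eq_zero] using h
    · intro k hk
      rw [Finset.mem_Ico] at hk
      rw [mem_singular] at hx
      rw [hx a b hab _ (by omega), hx a b hab _ (by omega)]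
      simp
  rcases lt_trichotomy a b with hab | hab | hab
  · exact key a b m n hm hn hab
  · subst hab
    -- The quadratic terms are again commutators, with a smaller minimum of the two levels.
    have ind : ∀ d m n : ℕ, min m n = d → 1 ≤ m → 1 ≤ n →
        act ρ a a m (act ρ a a n x) = act ρ a a n (act ρ a a m x) := by
      intro d
      induction d using Nat.strong_induction_on with
      | _ d ih =>
        intro m n hd hm hn
        have h := act_rel ρ a a a a hm hn x
        rw [sgn1_diag_left, Finset.sum_eq_zero] at h
        · simpa [sub_eq_zero] using h
        · intro k hk
          rw [Finset.mem_Ico] at hk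
          rw [ih k (by omega) k (m + n - 1 - k) (by omega) (by omega) (by omega), sub_self]
    exact ind _ m n rfl hm hn
  · exact (key b a n m hn hm hab).symm

/-- Commuting operators on a finite-dimensional complex space have a common eigenvector in every
nonzero invariant subspace; commutativity is only required on that subspace. -/
theorem exists_common_eigenvector [FiniteDimensional ℂ V] {ι : Type*} (f : ι → Module.End ℂ V)
    (d : ℕ) (W : Submodule ℂ V) (hd : Module.finrank ℂ W = d) (hW : ∃ x ∈ W, x ≠ 0)
    (hinv : ∀ i, ∀ x ∈ W, f i x ∈ W)
    (hcomm : ∀ i j, ∀ x ∈ W, f i (f j x) = f j (f i x)) :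
    ∃ v ∈ W, v ≠ 0 ∧ ∀ i, ∃ c : ℂ, f i v = c • v := by
  induction d using Nat.strong_induction_on generalizing W with
  | _ d ih =>
    by_cases hall : ∀ i, ∃ c : ℂ, ∀ x ∈ W, f i x = c • x
    · obtain ⟨x, hx, hx0⟩ := hW
      exact ⟨x, hx, hx0, fun i => (hall i).imp fun c hc => hc x hx⟩
    · push Not at hall
      obtain ⟨i, hi⟩ := hall
      have : Nontrivial W := by
        obtain ⟨x, hx, hx0⟩ := hW
        exact ⟨⟨⟨x, hx⟩, 0, fun h => hx0 (congrArg Subtype.val h)⟩⟩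
      obtain ⟨c, hc⟩ := Module.End.exists_eigenvalue ((f i).restrict (hinv i))
      obtain ⟨w, hw⟩ := hc.exists_hasEigenvector
      obtain ⟨y, hy, hyc⟩ := hi c
      have hmem : ∀ x, x ∈ W ⊓ Module.End.eigenspace (f i) c ↔ x ∈ W ∧ f i x = c • x := by
        intro x
        rw [Submodule.mem_inf, Module.End.mem_eigenspace_iff]
      have hlt : W ⊓ Module.End.eigenspace (f i) c < W := by
        refine lt_of_le_of_ne inf_le_left fun h => ?_
        exact hyc ((hmem y).1 (h.ge hy)).2
      obtain ⟨v, hv, h⟩ := ih _ (hd ▸ Submodule.finrank_lt_finrank_of_lt hlt) _ rfl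
        ⟨w, (hmem w).2 ⟨w.2, congrArg Subtype.val hw.apply_eq_smul⟩,
          fun h => hw.2 (Subtype.ext h)⟩
        (fun j x hx => by
          rw [hmem] at hx ⊢
          exact ⟨hinv j x hx.1, by rw [hcomm i j x hx.1, hx.2, map_smul]⟩)
        (fun j k x hx => hcomm j k x hx.1)
      exact ⟨v, hv.1, h⟩

theorem exists_maximalVec [FiniteDimensional ℂ V] [Nontrivial V]
    (ρ : Y M N →ₐ[ℂ] Module.End ℂ V) :
    ∃ (v : V) (Λ : Fin (M + N) → ℕ → ℂ), IsMaximalVec M N ρ v Λ := by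
  obtain ⟨v, hv, hv0, h⟩ := exists_common_eigenvector
    (fun p : Fin (M + N) × ℕ => act ρ p.1 p.1 (p.2 + 1)) _ (singular ρ) rfl (singular_ne_bot ρ)
    (fun p x hx => act_diag_mem_singular ρ p.1 (by omega) hx)
    (fun p q x hx => act_diag_comm ρ p.1 q.1 (by omega) (by omega) hx)
  choose c hc using h
  refine ⟨v, fun a n => c (a, n - 1), hv0, mem_singular.1 hv, fun a n hn => ?_⟩
  have := hc (a, n - 1)
  simp only [Nat.sub_add_cancel hn] at this
  exact this

/-! ### The degree filtration -/

/-- The degree of a word in the generators, where `t^a_b[n]` has degree `n`. -/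
def wordDeg (l : List (Gen M N)) : ℕ := (l.map fun g => g.2.2 + 1).sum

/-- The operator by which a word in the generators acts. -/
noncomputable def wordOp (ρ : Y M N →ₐ[ℂ] Module.End ℂ V) (l : List (Gen M N)) :
    Module.End ℂ V := (l.map fun g => act ρ g.1 g.2.1 (g.2.2 + 1)).prod

/-- The span of the vectors obtained from `v` by words of degree at most `D`. -/
noncomputable def fil (ρ : Y M N →ₐ[ℂ] Module.End ℂ V) (v : V) (D : ℕ) : Submodule ℂ V :=
  Submodule.span ℂ {x | ∃ l : List (Gen M N), wordDeg l ≤ D ∧ wordOp ρ l v = x}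

theorem fil_mono (ρ : Y M N →ₐ[ℂ] Module.End ℂ V) (v : V) {D E : ℕ} (h : D ≤ E) :
    fil ρ v D ≤ fil ρ v E :=
  Submodule.span_mono fun _ ⟨l, hl, hx⟩ => ⟨l, hl.trans h, hx⟩

theorem wordOp_mem_fil (ρ : Y M N →ₐ[ℂ] Module.End ℂ V) (v : V) {D : ℕ} {l : List (Gen M N)}
    (hl : wordDeg l ≤ D) : wordOp ρ l v ∈ fil ρ v D :=
  Submodule.subset_span ⟨l, hl, rfl⟩

theorem act_mem_fil (ρ : Y M N →ₐ[ℂ] Module.End ℂ V) {v x : V} {D E n : ℕ} (hn : 1 ≤ n)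
    (hx : x ∈ fil ρ v D) (a b : Fin (M + N)) (hE : D + n ≤ E) : act ρ a b n x ∈ fil ρ v E := by
  have : fil ρ v D ≤ (fil ρ v E).comap (act ρ a b n) := by
    refine Submodule.span_le.2 ?_
    rintro _ ⟨l, hl, rfl⟩
    refine Submodule.subset_span ⟨(a, b, n - 1) :: l, ?_, ?_⟩
    · simp only [wordDeg, List.map_cons, List.sum_cons] at hl ⊢
      omega
    · simp [wordOp, Nat.sub_add_cancel hn]
  exact this hx

/-- Generators commute up to sign modulo vectors of lower degree. -/
theorem act_comm_mem_fil (ρ : Y M N →ₐ[ℂ] Module.End ℂ V) {v x : V} {D E m n : ℕ} (hm : 1 ≤ m)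
    (hn : 1 ≤ n) (hx : x ∈ fil ρ v D) (a1 b1 a2 b2 : Fin (M + N)) (hE : D + m + n ≤ E + 1) :
    act ρ a1 b1 m (act ρ a2 b2 n x) - sgn1 M a1 b1 a2 b2 • act ρ a2 b2 n (act ρ a1 b1 m x)
      ∈ fil ρ v E := by
  rw [act_rel ρ a1 b1 a2 b2 hm hn x]
  refine add_mem (sub_mem ?_ (Submodule.smul_mem _ _ ?_))
    (Submodule.smul_mem _ _ (Submodule.sum_mem _ fun k hk => ?_))
  · split_ifs
    · exact act_mem_fil ρ (by omega) hx _ _ (by omega)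
    · exact zero_mem _
  · split_ifs
    · exact act_mem_fil ρ (by omega) hx _ _ (by omega)
    · exact zero_mem _
  · rw [Finset.mem_Ico] at hk
    refine sub_mem ?_ ?_
    · exact act_mem_fil ρ (by omega) (act_mem_fil ρ (by omega) hx _ _ le_rfl) _ _ (by omega)
    · exact act_mem_fil ρ (by omega) (act_mem_fil ρ (by omega) hx _ _ le_rfl) _ _ (by omega)

/-- The last letter of a word can be moved to the front, modulo lower degree. -/
theorem wordOp_act_mem_fil (ρ : Y M N →ₐ[ℂ] Module.End ℂ V) (v : V) (a b : Fin (M + N)) {n : ℕ}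
    (hn : 1 ≤ n) (l : List (Gen M N)) :
    ∃ ε : ℂ, ∀ E : ℕ, wordDeg l + n ≤ E + 1 →
      wordOp ρ l (act ρ a b n v) - ε • act ρ a b n (wordOp ρ l v) ∈ fil ρ v E := by
  induction l with
  | nil => exact ⟨1, fun E _ => by simp [wordOp]⟩
  | cons g l ih =>
    obtain ⟨ε, h⟩ := ih
    refine ⟨ε * sgn1 M g.1 g.2.1 a b, fun E hE => ?_⟩
    have hdeg : wordDeg (g :: l) = g.2.2 + 1 + wordDeg l := by simp [wordDeg]
    have hop : ∀ x, wordOp ρ (g :: l) x = act ρ g.1 g.2.1 (g.2.2 + 1) (wordOp ρ l x) := by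
      intro x; simp [wordOp]
    have h1 := act_mem_fil ρ (n := g.2.2 + 1) (E := E) (by omega)
      (h (wordDeg l + n - 1) (by omega)) g.1 g.2.1 (by omega)
    have h2 := act_comm_mem_fil ρ (m := g.2.2 + 1) (E := E) (by omega) hn
      (wordOp_mem_fil ρ v (le_refl (wordDeg l))) g.1 g.2.1 a b (by omega)
    have h3 := add_mem h1 (Submodule.smul_mem _ ε h2)
    rw [hop, hop]
    convert h3 using 1
    rw [map_sub, map_smul, smul_sub, smul_smul]
    abel

/-! ### Uniqueness -/

/-- The space `N⁻V`, the sum of the ranges of the lowering generators. -/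
noncomputable def lowRange (ρ : Y M N →ₐ[ℂ] Module.End ℂ V) : Submodule ℂ V :=
  ⨆ (a : Fin (M + N)) (b : Fin (M + N)) (_ : b < a) (n : ℕ) (_ : 1 ≤ n),
    LinearMap.range (act ρ a b n)

theorem act_mem_lowRange (ρ : Y M N →ₐ[ℂ] Module.End ℂ V) {a b : Fin (M + N)} (hab : b < a)
    {n : ℕ} (hn : 1 ≤ n) (x : V) : act ρ a b n x ∈ lowRange ρ := by
  have : LinearMap.range (act ρ a b n) ≤ lowRange ρ :=
    le_iSup_of_le a <| le_iSup_of_le b <| le_iSup_of_le hab <| le_iSup_of_le n <|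
      le_iSup_of_le hn le_rfl
  exact this ⟨x, rfl⟩

theorem fil_le (ρ : Y M N →ₐ[ℂ] Module.End ℂ V) {v : V} {Λ : Fin (M + N) → ℕ → ℂ}
    (hv : IsMaximalVec M N ρ v Λ) (D : ℕ) :
    fil ρ v D ≤ Submodule.span ℂ {v} ⊔ lowRange ρ := by
  induction D using Nat.strong_induction_on with
  | _ D ih =>
    refine Submodule.span_le.2 ?_
    rintro _ ⟨l, hl, rfl⟩
    rcases List.eq_nil_or_concat l with rfl | ⟨l, ⟨a, b, k⟩, rfl⟩
    · exact Submodule.mem_sup_left (by simp [wordOp, Submodule.mem_span_singleton_self])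
    have hdeg : wordDeg (l ++ [(a, b, k)]) = wordDeg l + (k + 1) := by simp [wordDeg]
    have hop : wordOp ρ (l ++ [(a, b, k)]) v = wordOp ρ l (act ρ a b (k + 1) v) := by
      simp [wordOp]
    rw [List.concat_eq_append, hdeg] at hl
    rw [SetLike.mem_coe, List.concat_eq_append, hop]
    rcases lt_trichotomy a b with hab | hab | hab
    · have : act ρ a b (k + 1) v = 0 := hv.2.1 a b hab _ (by omega)
      simp [this]
    · subst hab
      have : act ρ a a (k + 1) v = Λ a (k + 1) • v := hv.2.2 a _ (by omega)
      rw [this, map_smul]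
      exact Submodule.smul_mem _ _ (ih (wordDeg l) (by omega) (wordOp_mem_fil ρ v le_rfl))
    · obtain ⟨ε, h⟩ := wordOp_act_mem_fil ρ v a b (n := k + 1) (by omega) l
      have h1 := ih (D - 1) (by omega) (h (D - 1) (by omega))
      have h2 : ε • act ρ a b (k + 1) (wordOp ρ l v) ∈ Submodule.span ℂ {v} ⊔ lowRange ρ :=
        Submodule.mem_sup_right (Submodule.smul_mem _ _ (act_mem_lowRange ρ hab (by omega) _))
      simpa using add_mem h1 h2

/-- A subspace stable under the generators is stable under the whole super Yangian. -/
theorem invariant_of_generators (ρ : Y M N →ₐ[ℂ] Module.End ℂ V) (W : Submodule ℂ V)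
    (h : ∀ (a b : Fin (M + N)) (n : ℕ), 1 ≤ n → ∀ w ∈ W, act ρ a b n w ∈ W) (y : Y M N) :
    ∀ w ∈ W, ρ y w ∈ W := by
  obtain ⟨z, rfl⟩ := RingQuot.mkAlgHom_surjective ℂ (Rel M N) y
  induction z using FreeAlgebra.induction with
  | grade0 r =>
    intro w hw
    rw [AlgHom.commutes, AlgHom.commutes, Module.algebraMap_end_apply]
    exact W.smul_mem _ hw
  | grade1 g =>
    intro w hw
    exact h g.1 g.2.1 (g.2.2 + 1) (by omega) w hw
  | mul x y hx hy =>
    intro w hw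
    rw [map_mul, map_mul]
    exact hx _ (hy _ hw)
  | add x y hx hy =>
    intro w hw
    rw [map_add, map_add]
    exact W.add_mem (hx _ hw) (hy _ hw)

theorem span_sup_lowRange_eq_top {ρ : Y M N →ₐ[ℂ] Module.End ℂ V}
    (hirr : IsIrreducibleRep M N ρ) {v : V} {Λ : Fin (M + N) → ℕ → ℂ}
    (hv : IsMaximalVec M N ρ v Λ) : Submodule.span ℂ {v} ⊔ lowRange ρ = ⊤ := by
  have hmono : Monotone (fil ρ v) := fun _ _ h => fil_mono ρ v h
  have hmem : ∀ x, x ∈ (⨆ D, fil ρ v D) ↔ ∃ D, x ∈ fil ρ v D := fun x =>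
    Submodule.mem_iSup_of_directed _ hmono.directed_le
  have htop : (⨆ D, fil ρ v D) = ⊤ := by
    refine (hirr.2 _ (invariant_of_generators ρ _ fun a b n hn w hw => ?_)).resolve_left ?_
    · rw [hmem] at hw ⊢
      obtain ⟨D, hD⟩ := hw
      exact ⟨D + n, act_mem_fil ρ hn hD a b le_rfl⟩
    · intro hbot
      have : v ∈ (⨆ D, fil ρ v D) :=
        (hmem v).2 ⟨0, Submodule.subset_span ⟨[], by simp [wordDeg], by simp [wordOp]⟩⟩
      rw [hbot, Submodule.mem_bot] at this
      exact hv.1 this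
  rw [eq_top_iff, ← htop]
  exact iSup_le fun D => fil_le ρ hv D

theorem act_mem_maxGenEigenspace (ρ : Y M N →ₐ[ℂ] Module.End ℂ V) (a b : Fin (M + N)) {n : ℕ}
    (hn : 1 ≤ n) {ν : ℂ} {x : V} (hx : x ∈ (gradOp ρ).maxGenEigenspace ν) :
    act ρ a b n x ∈ (gradOp ρ).maxGenEigenspace (ν + (((a : ℕ) : ℂ) - ((b : ℕ) : ℂ))) := by
  rw [Module.End.mem_maxGenEigenspace] at hx ⊢
  obtain ⟨k, hk⟩ := hx
  refine ⟨k, ?_⟩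
  have hs : SemiconjBy (act ρ a b n) (gradOp ρ - ν • (1 : Module.End ℂ V))
      (gradOp ρ - (ν + (((a : ℕ) : ℂ) - ((b : ℕ) : ℂ))) • (1 : Module.End ℂ V)) := by
    refine LinearMap.ext fun y => ?_
    simp only [Module.End.mul_apply, LinearMap.sub_apply, LinearMap.smul_apply,
      Module.End.one_apply, map_sub, map_smul, gradOp_comm ρ a b hn]
    rw [add_smul]
    abel
  have h := LinearMap.congr_fun (hs.pow_right k).eq x
  simp only [Module.End.mul_apply, hk, map_zero] at h
  exact h.symm

/-- Lowering generators raise the `H`-eigenvalue, so `N⁻V` has no component at an eigenvalue `μ`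
of minimal real part. -/
theorem lowRange_le [FiniteDimensional ℂ V] (ρ : Y M N →ₐ[ℂ] Module.End ℂ V) {μ : ℂ}
    (hmin : ∀ c : ℝ, 0 < c → ¬ (gradOp ρ).HasEigenvalue (μ - c)) :
    lowRange ρ ≤ ⨆ (ν : ℂ) (_ : ν ≠ μ), (gradOp ρ).maxGenEigenspace ν := by
  refine iSup_le fun a => iSup_le fun b => iSup_le fun hab => iSup_le fun n => iSup_le fun hn => ?_
  rw [LinearMap.range_eq_map, ← Module.End.iSup_maxGenEigenspace_eq_top (gradOp ρ),
    Submodule.map_iSup]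
  refine iSup_le fun ν => ?_
  by_cases hν : ν + (((a : ℕ) : ℂ) - ((b : ℕ) : ℂ)) = μ
  · have hc : (0 : ℝ) < ((a : ℕ) : ℝ) - ((b : ℕ) : ℝ) := by
      have : ((b : ℕ) : ℝ) < ((a : ℕ) : ℝ) := by exact_mod_cast hab
      linarith
    have hnot := hmin _ hc
    have hνeq : μ - ((((a : ℕ) : ℝ) - ((b : ℕ) : ℝ) : ℝ) : ℂ) = ν := by
      rw [← hν]; push_cast; ring
    rw [hνeq, Module.End.hasEigenvalue_iff, not_not] at hnot
    have hbot : (gradOp ρ).maxGenEigenspace ν = ⊥ := by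
      by_contra hne
      exact (Module.End.hasEigenvalue_iff.1
        (Module.End.hasUnifEigenvalue_iff_hasUnifEigenvalue_one (by simp) |>.1 hne)) hnot
    rw [hbot, Submodule.map_bot]
    exact bot_le
  · refine le_trans ?_ (le_iSup₂_of_le _ hν le_rfl)
    rintro _ ⟨x, hx, rfl⟩
    exact act_mem_maxGenEigenspace ρ a b hn hx

theorem IsMaximalVec.exists_eigen {ρ : Y M N →ₐ[ℂ] Module.End ℂ V} {v : V}
    {Λ : Fin (M + N) → ℕ → ℂ} (hv : IsMaximalVec M N ρ v Λ) :
    ∃ κ : ℂ, v ∈ (gradOp ρ).maxGenEigenspace κ := by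
  refine ⟨∑ a : Fin (M + N), ((a : ℕ) : ℂ) * Λ a 1, ?_⟩
  have h : ∀ a, act ρ a a 1 v = Λ a 1 • v := fun a => hv.2.2 a 1 le_rfl
  rw [Module.End.mem_maxGenEigenspace]
  refine ⟨1, ?_⟩
  simp [gradOp, LinearMap.sum_apply, h, Finset.sum_smul, mul_smul]

end Auxiliary

/-- **Existence and uniqueness of the maximal vector** (Theorem 2): every finite dimensional
irreducible `Y(gl(M|N))`-module contains a maximal vector, unique up to scalar multiples. -/
theorem maximal_vector_exists_unique (M N : ℕ) (hMN : 1 ≤ M + N)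
    (V : Type) [AddCommGroup V] [Module ℂ V] [FiniteDimensional ℂ V]
    (ρ : Y M N →ₐ[ℂ] Module.End ℂ V) (hirr : IsIrreducibleRep M N ρ) :
    (∃ (v : V) (Λ : Fin (M + N) → ℕ → ℂ), IsMaximalVec M N ρ v Λ) ∧
    (∀ (v v' : V) (Λ Λ' : Fin (M + N) → ℕ → ℂ),
      IsMaximalVec M N ρ v Λ → IsMaximalVec M N ρ v' Λ' → ∃ c : ℂ, v' = c • v) := by
  have : Nontrivial V := by
    obtain ⟨v, hv⟩ := hirr.1
    exact ⟨⟨v, 0, hv⟩⟩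
  refine ⟨exists_maximalVec ρ, fun v v' Λ Λ' hv hv' => ?_⟩
  obtain ⟨μ, hμ, hmin⟩ := exists_minimal_eigenvalue (gradOp ρ)
  have hdisj := (gradOp ρ).independent_maxGenEigenspace μ
  have hlow := lowRange_le ρ hmin
  set K : Submodule ℂ V := ⨆ (ν : ℂ) (_ : ν ≠ μ), (gradOp ρ).maxGenEigenspace ν with hK
  -- A maximal vector outside the generalized `μ`-eigenspace would lie in `K`, forcing `K = V`.
  have hgen : ∀ (u : V) (Ξ : Fin (M + N) → ℕ → ℂ), IsMaximalVec M N ρ u Ξ →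
      u ∈ (gradOp ρ).maxGenEigenspace μ := by
    intro u Ξ hu
    obtain ⟨κ, hκ⟩ := hu.exists_eigen
    by_cases hκμ : κ = μ
    · exact hκμ ▸ hκ
    · exfalso
      have huK : u ∈ K := (le_iSup₂_of_le κ hκμ le_rfl : (gradOp ρ).maxGenEigenspace κ ≤ K) hκ
      have hKtop : K = ⊤ := by
        rw [eq_top_iff, ← span_sup_lowRange_eq_top hirr hu]
        exact sup_le ((Submodule.span_singleton_le_iff_mem u K).2 huK) hlow
      obtain ⟨x, hx⟩ := hμ.exists_hasEigenvector
      have hxg : x ∈ (gradOp ρ).maxGenEigenspace μ := by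
        rw [Module.End.mem_maxGenEigenspace]
        exact ⟨1, by simp [hx.apply_eq_smul]⟩
      exact hx.2 (Submodule.disjoint_def.1 hdisj x hxg (hKtop ▸ Submodule.mem_top))
  have hv'top : v' ∈ Submodule.span ℂ {v} ⊔ lowRange ρ :=
    span_sup_lowRange_eq_top hirr hv ▸ Submodule.mem_top
  obtain ⟨y, hy, z, hz, hyz⟩ := Submodule.mem_sup.1 hv'top
  obtain ⟨c, rfl⟩ := Submodule.mem_span_singleton.1 hy
  have hzg : z ∈ (gradOp ρ).maxGenEigenspace μ := by
    rw [show z = v' - c • v by rw [← hyz]; abel]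
    exact sub_mem (hgen v' Λ' hv') (Submodule.smul_mem _ _ (hgen v Λ hv))
  have hz0 := Submodule.disjoint_def.1 hdisj z hzg (hlow hz)
  exact ⟨c, by rw [← hyz, hz0, add_zero]⟩

end SY
end
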